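/- Let q > 1 be a real number. For integers n, m ≥ 0, the integral over x ∈ [−2, 2] of X_n(x)·X_m(x)·(q+1)/((q^{1/2}+q^{−1/2})² − x²)·√(4−x²)/(2π) with respect to Lebesgue measure equals: 1 if n = m = 0; (1 + q^{−1})·q^m if n = m ≥ 1; and 0 if n ≠ m. -/

import Mathlib

/-- `X n` is the Satake transform of the characteristic function `f_n` of the double coset
`GL₂(ℤ_p) diag(p^n,1) GL₂(ℤ_p)`, viewed as a function of `x = q^s + q^{-s} = 2 cos θ`:
`X 0 = 1` and, for `n ≥ 1`,
`X n (2 cos θ) = q^{n/2} (sin((n+1)θ) - q⁻¹ sin((n-1)θ)) / sin θ`,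
expressed via Chebyshev polynomials of the second kind. -/
noncomputable def satakeX (q : ℝ) (n : ℕ) (x : ℝ) : ℝ :=
  if n = 0 then 1
  else (Real.sqrt q) ^ n *
    ((Polynomial.Chebyshev.U ℝ (n : ℤ)).eval (x / 2) -
      q⁻¹ * (Polynomial.Chebyshev.U ℝ ((n : ℤ) - 2)).eval (x / 2))

open Real in
theorem satakeX_two_mul_cos_mul_sin {q : ℝ} (hq : 1 < q) (n : ℕ) (θ : ℝ) :
    satakeX q n (2 * cos θ) * sin θ = (if n = 0 then (1 + q⁻¹)⁻¹ else √q ^ n) *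
      (sin ((n + 1) * θ) - q⁻¹ * sin ((n - 1) * θ)) := by
  have hq0 : 0 < q := by linarith
  by_cases hn : n = 0
  · subst hn
    have h : (1 + q⁻¹) ≠ 0 := by positivity
    have h1 : (0 - 1) * θ = -θ := by ring
    simp only [satakeX, if_true, Nat.cast_zero, h1, sin_neg, zero_add, one_mul]
    field_simp
    ring
  · have h1 := Polynomial.Chebyshev.U_real_cos θ (n : ℤ)
    have h2 := Polynomial.Chebyshev.U_real_cos θ ((n : ℤ) - 2)
    push_cast at h1 h2
    have h3 : ((n : ℝ) - 2 + 1) * θ = (n - 1) * θ := by ring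
    rw [h3] at h2
    have h4 : 2 * cos θ / 2 = cos θ := by ring
    simp only [satakeX, if_neg hn, h4]
    rw [← h1, ← h2]
    ring

/-- The squared modulus `‖1 - t e^{2iθ}‖²`. -/
noncomputable def normSqFactor (t θ : ℝ) : ℝ := 1 - 2 * t * Real.cos (2 * θ) + t ^ 2

theorem normSqFactor_pos {t : ℝ} (h0 : 0 ≤ t) (h1 : t < 1) (θ : ℝ) : 0 < normSqFactor t θ := by
  unfold normSqFactor
  nlinarith [Real.cos_le_one (2 * θ), mul_nonneg h0 (sub_nonneg.2 (Real.cos_le_one (2 * θ))),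
    mul_pos (sub_pos.2 h1) (sub_pos.2 h1)]

theorem continuous_normSqFactor (t : ℝ) : Continuous (normSqFactor t) := by
  unfold normSqFactor
  fun_prop

/-- The real part of `z ^ N * (z ^ 2 - t) / (1 - t * z ^ 2)` at `z = e^{iθ}`. -/
noncomputable def blaschkeRe (t : ℝ) (N : ℕ) (θ : ℝ) : ℝ :=
  (Real.cos ((N + 2) * θ) - 2 * t * Real.cos (N * θ) + t ^ 2 * Real.cos ((N - 2) * θ)) /
    normSqFactor t θ

theorem continuous_blaschkeRe {t : ℝ} (h0 : 0 ≤ t) (h1 : t < 1) (N : ℕ) :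
    Continuous (blaschkeRe t N) := by
  unfold blaschkeRe
  exact Continuous.div (by fun_prop) (continuous_normSqFactor t)
    fun θ => (normSqFactor_pos h0 h1 θ).ne'

theorem one_sub_mul_sq_ne_zero {t : ℝ} (h0 : 0 ≤ t) (h1 : t < 1) {z : ℂ} (hz : ‖z‖ ≤ 1) :
    1 - (t : ℂ) * z ^ 2 ≠ 0 := by
  intro h
  have h2 : ‖(t : ℂ) * z ^ 2‖ = 1 := by rw [← sub_eq_zero.1 h, norm_one]
  rw [norm_mul, norm_pow, Complex.norm_real, Real.norm_of_nonneg h0] at h2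
  nlinarith [pow_le_one₀ (norm_nonneg z) hz (n := 2), sq_nonneg ‖z‖]

theorem re_blaschke_circleMap {t : ℝ} (h0 : 0 ≤ t) (h1 : t < 1) (N : ℕ) (θ : ℝ) :
    ((circleMap 0 1 θ) ^ N * ((circleMap 0 1 θ) ^ 2 - t) /
      (1 - t * (circleMap 0 1 θ) ^ 2) : ℂ).re = blaschkeRe t N θ := by
  have hD := (normSqFactor_pos h0 h1 θ).ne'
  have hn : ‖circleMap 0 1 θ‖ = 1 := by simp
  have hd := one_sub_mul_sq_ne_zero h0 h1 hn.le
  have hz : circleMap 0 1 θ = Complex.exp (θ * Complex.I) := by simp [circleMap]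
  have hexp (x : ℝ) : Complex.exp (x * Complex.I) = Real.cos x + Real.sin x * Complex.I := by
    rw [Complex.exp_mul_I]; push_cast; rfl
  set z := circleMap 0 1 θ
  set w := Complex.exp (-(θ * Complex.I)) with hw
  have hzw : z * w = 1 := by rw [hz, hw, ← Complex.exp_add]; simp
  have hDc : (normSqFactor t θ : ℂ) = (1 - t * z ^ 2) * (1 - t * w ^ 2) := by
    have : 2 * (Real.cos (2 * θ) : ℂ) = z ^ 2 + w ^ 2 := by
      push_cast
      rw [Complex.two_cos, hz, hw, ← Complex.exp_nat_mul, ← Complex.exp_nat_mul]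
      congr 2 <;> push_cast <;> ring
    unfold normSqFactor
    push_cast at this ⊢
    linear_combination -(t : ℂ) * this - (t : ℂ) ^ 2 * (z * w + 1) * hzw
  have e1 : z ^ (N + 2) = Complex.exp (((N + 2) * θ : ℝ) * Complex.I) := by
    rw [hz, ← Complex.exp_nat_mul]; congr 1; push_cast; ring
  have e2 : z ^ N = Complex.exp ((N * θ : ℝ) * Complex.I) := by
    rw [hz, ← Complex.exp_nat_mul]; congr 1; push_cast; ring
  have e3 : z ^ N * w ^ 2 = Complex.exp (((N - 2) * θ : ℝ) * Complex.I) := by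
    rw [hz, hw, ← Complex.exp_nat_mul, ← Complex.exp_nat_mul, ← Complex.exp_add]
    congr 1; push_cast; ring
  have key : z ^ N * (z ^ 2 - t) / (1 - t * z ^ 2) =
      (z ^ (N + 2) - 2 * t * z ^ N + t ^ 2 * (z ^ N * w ^ 2)) / (normSqFactor t θ : ℂ) := by
    rw [div_eq_div_iff hd (by exact_mod_cast hD), hDc]
    linear_combination (-(t : ℂ) * z ^ N * (z * w + 1) * (1 - t * z ^ 2)) * hzw
  rw [key, Complex.div_ofReal_re, e1, e3, e2, hexp, hexp, hexp, blaschkeRe]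
  congr 1
  simp [← Complex.ofReal_pow, -Complex.ofReal_cos, -Complex.ofReal_sin]

open Real in
theorem integral_blaschkeRe {t : ℝ} (h0 : 0 ≤ t) (h1 : t < 1) (N : ℕ) :
    ∫ θ in (0 : ℝ)..π, blaschkeRe t N θ = if N = 0 then -t * π else 0 := by
  have hc := continuous_blaschkeRe h0 h1 N
  have hne : ∀ z ∈ Metric.closedBall (0 : ℂ) 1, 1 - (t : ℂ) * z ^ 2 ≠ 0 := fun z hz =>
    one_sub_mul_sq_ne_zero h0 h1 (by simpa using hz)
  set F : ℂ → ℂ := fun z => z ^ N * (z ^ 2 - t) / (1 - t * z ^ 2) with hF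
  have hdiff : DifferentiableOn ℂ F (Metric.closedBall 0 1) :=
    DifferentiableOn.div (by fun_prop) (by fun_prop) hne
  have hmean : circleAverage F 0 1 = F 0 := by
    refine circleAverage_of_differentiable_on_off_countable Set.countable_empty ?_ ?_
    · simpa using hdiff.continuousOn
    · intro z hz
      have hz1 : z ∈ Metric.ball (0 : ℂ) 1 := by simpa using hz
      exact (hdiff.mono Metric.ball_subset_closedBall).differentiableAt
        (Metric.isOpen_ball.mem_nhds hz1)
  have hFc : Continuous fun θ => F (circleMap 0 1 θ) :=
    hdiff.continuousOn.comp_continuous (continuous_circleMap 0 1) fun θ => by simp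
  have hfull : ∫ θ in (0 : ℝ)..2 * π, blaschkeRe t N θ = 2 * π * (F 0).re := by
    have h2 := Complex.reCLM.intervalIntegral_comp_comm (hFc.intervalIntegrable (μ := MeasureTheory.volume) 0 (2 * π))
    simp only [Complex.reCLM_apply] at h2
    rw [← hmean, circleAverage_def, Complex.smul_re, ← h2, smul_eq_mul, ← mul_assoc,
      mul_inv_cancel₀ (by positivity), one_mul]
    exact intervalIntegral.integral_congr fun θ _ => (re_blaschke_circleMap h0 h1 N θ).symm
  have hsymm : ∫ θ in π..2 * π, blaschkeRe t N θ = ∫ θ in (0 : ℝ)..π, blaschkeRe t N θ := by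
    have h3 := intervalIntegral.integral_comp_sub_left (a := 0) (b := π) (blaschkeRe t N) (2 * π)
    rw [show 2 * π - π = π by ring, sub_zero] at h3
    rw [← h3]
    refine intervalIntegral.integral_congr fun θ _ => ?_
    have hcos (k : ℤ) : cos (k * (2 * π - θ)) = cos (k * θ) := by
      rw [show (k : ℝ) * (2 * π - θ) = k * (2 * π) - k * θ by ring, cos_int_mul_two_pi_sub]
    have c1 := hcos (N + 2)
    have c2 := hcos N
    have c3 := hcos (N - 2)
    have c4 := hcos 2
    push_cast at c1 c2 c3 c4
    simp only [blaschkeRe, normSqFactor, c1, c2, c3, c4]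
  have hadd := intervalIntegral.integral_add_adjacent_intervals
    (hc.intervalIntegrable 0 π) (hc.intervalIntegrable π (2 * π)) (μ := MeasureTheory.volume)
  rw [hsymm, hfull] at hadd
  have hF0 : (F 0).re = if N = 0 then -t else 0 := by
    by_cases hN : N = 0 <;> simp [hF, hN]
  rw [hF0] at hadd
  split_ifs at hadd ⊢ <;> linarith

open Real in
theorem integral_cos_sub_mul (n m : ℕ) :
    ∫ θ in (0 : ℝ)..π, cos (((n : ℝ) - m) * θ) = if n = m then π else 0 := by
  split_ifs with h
  · simp [h]
  · have hne : (n : ℝ) - m ≠ 0 := sub_ne_zero.2 (by exact_mod_cast h)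
    have hs : sin (((n : ℝ) - m) * π) = 0 := by
      simpa using sin_int_mul_pi ((n : ℤ) - m)
    rw [intervalIntegral.integral_comp_mul_left _ hne, integral_cos]
    simp [hs]

open Real in
theorem two_mul_sin_combination_mul {t : ℝ} (h0 : 0 ≤ t) (h1 : t < 1) (n m : ℕ) (θ : ℝ) :
    2 * ((sin ((n + 1) * θ) - t * sin ((n - 1) * θ)) *
      (sin ((m + 1) * θ) - t * sin ((m - 1) * θ))) / normSqFactor t θ =
      cos (((n : ℝ) - m) * θ) - blaschkeRe t (n + m) θ := by
  have hD := (normSqFactor_pos h0 h1 θ).ne'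
  rw [blaschkeRe, div_eq_iff hD, sub_mul (cos _), div_mul_cancel₀ _ hD, normSqFactor]
  have p1 := two_mul_sin_mul_sin ((n + 1) * θ) ((m + 1) * θ)
  have p2 := two_mul_sin_mul_sin ((n + 1) * θ) ((m - 1) * θ)
  have p3 := two_mul_sin_mul_sin ((n - 1) * θ) ((m + 1) * θ)
  have p4 := two_mul_sin_mul_sin ((n - 1) * θ) ((m - 1) * θ)
  have p5 := two_mul_cos_mul_cos (2 * θ) (((n : ℝ) - m) * θ)
  have p6 : cos (2 * θ - ((n : ℝ) - m) * θ) = cos (((n : ℝ) - m) * θ - 2 * θ) := by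
    rw [← cos_neg]; ring_nf
  rw [p6] at p5
  push_cast
  ring_nf at p1 p2 p3 p4 p5 ⊢
  linear_combination p1 - t * p2 - t * p3 + t ^ 2 * p4 + t * p5

open Real in
theorem integral_sin_combination_mul {t : ℝ} (h0 : 0 ≤ t) (h1 : t < 1) (n m : ℕ) :
    ∫ θ in (0 : ℝ)..π, 2 * ((sin ((n + 1) * θ) - t * sin ((n - 1) * θ)) *
      (sin ((m + 1) * θ) - t * sin ((m - 1) * θ))) / normSqFactor t θ =
      (if n = m then π else 0) - if n + m = 0 then -t * π else 0 := by
  simp only [two_mul_sin_combination_mul h0 h1]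
  rw [intervalIntegral.integral_sub, integral_cos_sub_mul, integral_blaschkeRe h0 h1]
  · exact Continuous.intervalIntegrable (by fun_prop) _ _
  · exact (continuous_blaschkeRe h0 h1 _).intervalIntegrable _ _

open Real in
theorem integral_eq_integral_two_mul_cos {g : ℝ → ℝ} (hg : ContinuousOn g (Set.Icc (-2) 2)) :
    ∫ x in (-2 : ℝ)..2, g x = ∫ θ in (0 : ℝ)..π, g (2 * cos θ) * (2 * sin θ) := by
  have h := intervalIntegral.integral_comp_mul_deriv'' (a := π) (b := 0)
    (f := fun θ => 2 * cos θ) (f' := fun θ => 2 * -sin θ) (g := g)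
    (by fun_prop) (fun θ _ => ((hasDerivAt_cos θ).const_mul 2).hasDerivWithinAt) (by fun_prop)
    (hg.mono (by
      rintro _ ⟨θ, -, rfl⟩
      constructor <;> dsimp only <;> linarith [neg_one_le_cos θ, cos_le_one θ]))
  simp only [cos_pi, cos_zero, mul_neg, mul_one, Function.comp] at h
  rw [← h, intervalIntegral.integral_symm, ← intervalIntegral.integral_neg]
  simp only [neg_neg]

theorem continuous_satakeX (q : ℝ) (n : ℕ) : Continuous (satakeX q n) := by
  unfold satakeX
  split_ifs <;> fun_prop

theorem four_lt_sqrt_add_inv_sq {q : ℝ} (hq : 1 < q) : 4 < (√q + (√q)⁻¹) ^ 2 := by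
  have hr : 1 < √q := Real.lt_sqrt_of_sq_lt (by simpa using hq)
  have h : (√q) * (√q)⁻¹ = 1 := mul_inv_cancel₀ (by positivity)
  have h2 : (√q)⁻¹ < 1 := inv_lt_one_of_one_lt₀ hr
  nlinarith [mul_pos (sub_pos.2 (h2.trans hr)) (sub_pos.2 (h2.trans hr))]

/-- Plancherel formula (Lemma 5.1) evaluated on the Hecke algebra basis `{f_n}`:
the integral of `X_n · X_m` against the spherical Plancherel measure
`(q+1)/((q^{1/2}+q^{-1/2})² - x²) · √(4-x²)/(2π)` on `[-2,2]` equals `1` if `n = m = 0`,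
`(1+q⁻¹)·q^m` if `n = m ≥ 1`, and `0` if `n ≠ m`. -/
theorem plancherel_hecke_basis (q : ℝ) (hq : 1 < q) (n m : ℕ) :
    ∫ x in (-2 : ℝ)..2,
        satakeX q n x * satakeX q m x *
          ((q + 1) / ((Real.sqrt q + (Real.sqrt q)⁻¹) ^ 2 - x ^ 2)) *
          (Real.sqrt (4 - x ^ 2) / (2 * Real.pi)) =
      if n = m then (if n = 0 then 1 else (1 + q⁻¹) * q ^ n) else 0 := by
  have hq0 : 0 < q := by linarith
  have ht0 : 0 ≤ q⁻¹ := by positivity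
  have ht1 : q⁻¹ < 1 := inv_lt_one_of_one_lt₀ hq
  have hrr : √q ^ 2 = q := Real.sq_sqrt hq0.le
  have hrne : √q ≠ 0 := (Real.sqrt_pos.2 hq0).ne'
  have h4 := four_lt_sqrt_add_inv_sq hq
  rw [integral_eq_integral_two_mul_cos]
  swap
  · have hX := (continuous_satakeX q n).continuousOn (s := Set.Icc (-2) 2)
    have hY := (continuous_satakeX q m).continuousOn (s := Set.Icc (-2) 2)
    refine ((hX.mul hY).mul (ContinuousOn.div (by fun_prop) (by fun_prop) ?_)).mul (by fun_prop)
    rintro x ⟨hx1, hx2⟩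
    nlinarith
  set a : ℕ → ℝ := fun k => if k = 0 then (1 + q⁻¹)⁻¹ else √q ^ k with ha
  have hpt : ∀ θ ∈ Set.uIcc 0 Real.pi,
      satakeX q n (2 * Real.cos θ) * satakeX q m (2 * Real.cos θ) *
          ((q + 1) / ((√q + (√q)⁻¹) ^ 2 - (2 * Real.cos θ) ^ 2)) *
          (√(4 - (2 * Real.cos θ) ^ 2) / (2 * Real.pi)) * (2 * Real.sin θ) =
        (a n * a m * (1 + q⁻¹) / Real.pi) *
        (2 * ((Real.sin ((n + 1) * θ) - q⁻¹ * Real.sin ((n - 1) * θ)) *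
          (Real.sin ((m + 1) * θ) - q⁻¹ * Real.sin ((m - 1) * θ))) / normSqFactor q⁻¹ θ) := by
    intro θ hθ
    rw [Set.uIcc_of_le Real.pi_pos.le] at hθ
    have hs : 0 ≤ Real.sin θ := Real.sin_nonneg_of_mem_Icc hθ
    have hsqrt : √(4 - (2 * Real.cos θ) ^ 2) = 2 * Real.sin θ := by
      rw [← Real.sqrt_sq (by positivity : 0 ≤ 2 * Real.sin θ)]
      congr 1
      linear_combination -4 * Real.sin_sq_add_cos_sq θ
    have hden : (√q + (√q)⁻¹) ^ 2 - (2 * Real.cos θ) ^ 2 = q * normSqFactor q⁻¹ θ := by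
      have : (√q + (√q)⁻¹) ^ 2 = q + 2 + q⁻¹ := by
        rw [add_sq, inv_pow, hrr, mul_assoc, mul_inv_cancel₀ hrne]
        ring
      rw [this, normSqFactor, Real.cos_two_mul]
      field_simp
      ring
    have hD := (normSqFactor_pos ht0 ht1 θ).ne'
    have hn := satakeX_two_mul_cos_mul_sin hq n θ
    have hm := satakeX_two_mul_cos_mul_sin hq m θ
    rw [hsqrt, hden]
    have hw : (q + 1) / (q * normSqFactor q⁻¹ θ) = (1 + q⁻¹) / normSqFactor q⁻¹ θ := by
      field_simp
    rw [hw]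
    calc _ = (1 + q⁻¹) / Real.pi * 2 * ((satakeX q n (2 * Real.cos θ) * Real.sin θ) *
          (satakeX q m (2 * Real.cos θ) * Real.sin θ)) / normSqFactor q⁻¹ θ := by
          ring
      _ = _ := by
        rw [hn, hm]
        ring
  rw [intervalIntegral.integral_congr hpt, intervalIntegral.integral_const_mul,
    integral_sin_combination_mul ht0 ht1]
  have hpi := Real.pi_ne_zero
  have hone : 1 + q⁻¹ ≠ 0 := by positivity
  by_cases hnm : n = m
  · subst hnm
    by_cases hn : n = 0
    · simp only [ha, hn, if_true, add_zero]
      field_simp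
      ring
    · have hpow : √q ^ n * √q ^ n = q ^ n := by rw [← mul_pow, ← sq, hrr]
      simp only [ha, hn, if_true, if_false, hpow, show n + n ≠ 0 by omega, sub_zero]
      field_simp
  · simp [hnm, show ¬ (n = 0 ∧ m = 0) by omega]
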